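/- arXiv:1412.5357 — 2 statements merged into one kernel-verified Lean document; each statement's English description precedes it below -/
import Mathlib

section
/- The one-relator group with torsion G = ⟨a, t; (t⁻¹ a⁻¹ t a²)²⟩ is isomorphic to the HNN-extension of the base group H = ⟨a, b; (b⁻¹ a²)²⟩ with stable letter t, associated cyclic subgroups ⟨a⟩ and ⟨b⟩ of H, and associated isomorphism sending a to b (so that t⁻¹ a t = b in the HNN-extension). -/
/-!
Adjoining to `⟨α | R⟩` a stable letter that conjugates a generator `x` to a generator `y` makes `y`
redundant, since `y = t⁻¹ x t`. Eliminating `y` from the relators by this substitution is a Tietze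
transformation, and it turns `(b⁻¹ a²)²` into `(t⁻¹ a⁻¹ t a²)²`. The generators `a` and `b` of `H`
have infinite order because `a ↦ 1`, `b ↦ 2` defines a homomorphism from `H` to `ℤ`, so there is an
isomorphism `⟨a⟩ ≃* ⟨b⟩` matching them.
-/

open Subgroup

theorem mem_zpowers_mk_self {G : Type*} [Group G] (g : G) (c : zpowers g) :
    c ∈ zpowers (⟨g, mem_zpowers g⟩ : zpowers g) := by
  obtain ⟨_, n, rfl⟩ := c
  exact ⟨n, rfl⟩

theorem exists_zpowers_mulEquiv_of_orderOf_eq {G G' : Type*} [Group G] [Group G'] {x : G} {y : G'}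
    (h : orderOf x = orderOf y) :
    ∃ φ : zpowers x ≃* zpowers y, φ ⟨x, mem_zpowers x⟩ = ⟨y, mem_zpowers y⟩ :=
  ⟨mulEquivOfOrderOfEq (mem_zpowers_mk_self x) (mem_zpowers_mk_self y)
    (by simpa only [orderOf_mk] using h), mulEquivOfOrderOfEq_apply_gen ..⟩

theorem semiconjBy_map_of_forall_mem_zpowers {C M : Type*} [Group C] [Group M] {g : C}
    (hg : ∀ c, c ∈ zpowers g) {f₁ f₂ : C →* M} {s : M} (h : SemiconjBy s (f₁ g) (f₂ g)) (c : C) :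
    SemiconjBy s (f₁ c) (f₂ c) := by
  obtain ⟨n, rfl⟩ := hg c
  simpa only [map_zpow] using h.zpow_right n

theorem orderOf_presentedGroup_of_eq_zero {α M : Type*} [Group M] [IsMulTorsionFree M]
    {R : Set (FreeGroup α)} {f : α → M} (hR : ∀ r ∈ R, FreeGroup.lift f r = 1) {x : α}
    (hx : f x ≠ 1) : orderOf (PresentedGroup.of x : PresentedGroup R) = 0 := by
  have hdvd : orderOf (f x) ∣ orderOf (PresentedGroup.of x : PresentedGroup R) := by
    simpa only [PresentedGroup.toGroup.of] using
      orderOf_map_dvd (PresentedGroup.toGroup hR) (PresentedGroup.of x)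
  rwa [orderOf_eq_zero (not_isOfFinOrder_of_isMulTorsionFree hx), zero_dvd_iff] at hdvd

section Elimination

variable {α : Type*} [DecidableEq α]

/-- The substitution `y ↦ y⁻¹ x y` on words in `α`, fixing every other letter. On the right-hand
side the letter `y`, once eliminated as a generator, is reused as the name of the stable letter. -/
def conjSubst (x y : α) : FreeGroup α →* FreeGroup α :=
  FreeGroup.lift (Function.update FreeGroup.of y
    ((FreeGroup.of y)⁻¹ * FreeGroup.of x * FreeGroup.of y))

@[simp]
theorem conjSubst_of_self (x y : α) :
    conjSubst x y (FreeGroup.of y) = (FreeGroup.of y)⁻¹ * FreeGroup.of x * FreeGroup.of y := by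
  simp [conjSubst]

@[simp]
theorem conjSubst_of_of_ne {x y z : α} (h : z ≠ y) :
    conjSubst x y (FreeGroup.of z) = FreeGroup.of z := by
  simp [conjSubst, h]

variable {R : Set (FreeGroup α)} {x y : α} {B : Subgroup (PresentedGroup R)}
  {φ : zpowers (PresentedGroup.of x : PresentedGroup R) ≃* B}

variable (φ) in
/-- The images in the HNN-extension of the generators left after eliminating `y`. The letter `y`
goes to `t⁻¹` because Mathlib's stable letter satisfies `t * a * t⁻¹ = φ a`, whereas `conjSubst`
follows the convention `t⁻¹ * a * t = φ a`. -/
def hnnGen (y : α) : α → HNNExtension (PresentedGroup R) _ B φ :=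
  Function.update (HNNExtension.of ∘ PresentedGroup.of) y HNNExtension.t⁻¹

@[simp]
theorem hnnGen_self : hnnGen φ y y = HNNExtension.t⁻¹ :=
  Function.update_self ..

@[simp]
theorem hnnGen_of_ne {z : α} (h : z ≠ y) :
    hnnGen φ y z = HNNExtension.of (PresentedGroup.of z) :=
  Function.update_of_ne h ..

theorem lift_hnnGen_conjSubst (hxy : x ≠ y)
    (hφ : (φ ⟨.of x, mem_zpowers _⟩ : PresentedGroup R) = .of y) (w : FreeGroup α) :
    FreeGroup.lift (hnnGen φ y) (conjSubst x y w) =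
      HNNExtension.of (PresentedGroup.mk R w) := by
  suffices h : (FreeGroup.lift (hnnGen φ y)).comp (conjSubst x y) =
      HNNExtension.of.comp (PresentedGroup.mk R) from DFunLike.congr_fun h w
  refine FreeGroup.ext_hom _ _ fun z => ?_
  change _ = HNNExtension.of (PresentedGroup.of z)
  obtain rfl | hz := eq_or_ne z y
  · have hconj := HNNExtension.equiv_eq_conj (φ := φ) ⟨.of x, mem_zpowers _⟩
    rw [hφ] at hconj
    simp [hxy, hconj]
  · simp [hz]

variable (R x y) in
/-- The homomorphism induced by `conjSubst`, from the base group of the HNN-extension to the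
presentation with `y` eliminated. -/
def conjSubstMap : PresentedGroup R →* PresentedGroup (conjSubst x y '' R) :=
  PresentedGroup.map (conjSubst x y) (Set.mapsTo_image _ _)

@[simp]
theorem conjSubstMap_of_self : conjSubstMap R x y (.of y) = (.of y)⁻¹ * .of x * .of y :=
  congrArg (PresentedGroup.mk _) (conjSubst_of_self x y)

@[simp]
theorem conjSubstMap_of_of_ne {z : α} (h : z ≠ y) : conjSubstMap R x y (.of z) = .of z :=
  congrArg (PresentedGroup.mk _) (conjSubst_of_of_ne h)

theorem semiconjBy_conjSubstMap (hxy : x ≠ y)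
    (hφ : (φ ⟨.of x, mem_zpowers _⟩ : PresentedGroup R) = .of y)
    (a : zpowers (PresentedGroup.of x : PresentedGroup R)) :
    SemiconjBy (PresentedGroup.of y)⁻¹ (conjSubstMap R x y a) (conjSubstMap R x y (φ a)) := by
  refine semiconjBy_map_of_forall_mem_zpowers (mem_zpowers_mk_self _)
    (f₁ := (conjSubstMap R x y).comp (zpowers _).subtype)
    (f₂ := (conjSubstMap R x y).comp (B.subtype.comp φ.toMonoidHom)) ?_ a
  simp [hφ, hxy, SemiconjBy]

variable (hxy : x ≠ y) (hφ : (φ ⟨.of x, mem_zpowers _⟩ : PresentedGroup R) = .of y)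

/-- The homomorphism from the presentation with `y` eliminated to the HNN-extension. -/
def toHNNExtension :
    PresentedGroup (conjSubst x y '' R) →* HNNExtension (PresentedGroup R) _ B φ :=
  PresentedGroup.toGroup (f := hnnGen φ y) <| by
    rintro _ ⟨r, hr, rfl⟩
    rw [lift_hnnGen_conjSubst hxy hφ, PresentedGroup.one_of_mem hr, map_one]

@[simp]
theorem toHNNExtension_of (z : α) :
    toHNNExtension hxy hφ (.of z) = hnnGen φ y z :=
  PresentedGroup.toGroup.of _

@[simp]
theorem toHNNExtension_conjSubstMap (g : PresentedGroup R) :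
    toHNNExtension hxy hφ (conjSubstMap R x y g) = HNNExtension.of g := by
  obtain ⟨w, rfl⟩ := PresentedGroup.mk_surjective R g
  exact lift_hnnGen_conjSubst hxy hφ w

/-- The inverse of `toHNNExtension`: it restricts to `conjSubstMap` on the base group and sends
the stable letter to `y⁻¹`. -/
def ofHNNExtension :
    HNNExtension (PresentedGroup R) _ B φ →* PresentedGroup (conjSubst x y '' R) :=
  HNNExtension.lift (conjSubstMap R x y) (PresentedGroup.of y)⁻¹ (semiconjBy_conjSubstMap hxy hφ)

@[simp]
theorem ofHNNExtension_of (g : PresentedGroup R) :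
    ofHNNExtension hxy hφ (HNNExtension.of g) = conjSubstMap R x y g :=
  HNNExtension.lift_of ..

@[simp]
theorem ofHNNExtension_t :
    ofHNNExtension hxy hφ HNNExtension.t = (PresentedGroup.of y)⁻¹ :=
  HNNExtension.lift_t ..

theorem ofHNNExtension_comp_toHNNExtension :
    (ofHNNExtension hxy hφ).comp (toHNNExtension hxy hφ) = MonoidHom.id _ := by
  ext z
  obtain rfl | hz := eq_or_ne z y
  · simp
  · simp [hz]

theorem toHNNExtension_comp_ofHNNExtension :
    (toHNNExtension hxy hφ).comp (ofHNNExtension hxy hφ) = MonoidHom.id _ := by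
  apply HNNExtension.hom_ext
  · ext g
    simp
  · simp

/-- The Tietze elimination of `y`: an HNN-extension of `⟨α | R⟩` whose stable letter conjugates the
generator `x` to the generator `y` is presented by the relators `R` with `y⁻¹ x y` substituted for
`y`, the letter `y` now standing for the inverse of Mathlib's stable letter. -/
def presentedGroupEquivHNNExtension :
    PresentedGroup (conjSubst x y '' R) ≃* HNNExtension (PresentedGroup R) _ B φ :=
  (toHNNExtension hxy hφ).toMulEquiv (ofHNNExtension hxy hφ)
    (ofHNNExtension_comp_toHNNExtension hxy hφ) (toHNNExtension_comp_ofHNNExtension hxy hφ)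

end Elimination

/-- The one-relator group with torsion `G = ⟨a, t; (t⁻¹ a⁻¹ t a²)²⟩`
(with `a = FreeGroup.of true`, `t = FreeGroup.of false`) is isomorphic to the
HNN-extension of the base group `H = ⟨a, b; (b⁻¹ a²)²⟩` (with `a = FreeGroup.of true`,
`b = FreeGroup.of false`) with associated cyclic subgroups `⟨a⟩` and `⟨b⟩` of `H` and
associated isomorphism sending `a` to `b`. -/
theorem statement_15 :
    let relG : Set (FreeGroup Bool) :=
      {((FreeGroup.of false)⁻¹ * (FreeGroup.of true)⁻¹ * FreeGroup.of false *
          FreeGroup.of true ^ 2) ^ 2}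
    let relH : Set (FreeGroup Bool) :=
      {((FreeGroup.of false)⁻¹ * FreeGroup.of true ^ 2) ^ 2}
    let A : Subgroup (PresentedGroup relH) :=
      Subgroup.zpowers (PresentedGroup.of true)
    let B : Subgroup (PresentedGroup relH) :=
      Subgroup.zpowers (PresentedGroup.of false)
    ∃ φ : A ≃* B,
      φ ⟨PresentedGroup.of true, Subgroup.mem_zpowers _⟩ =
        ⟨PresentedGroup.of false, Subgroup.mem_zpowers _⟩ ∧
      Nonempty (PresentedGroup relG ≃* HNNExtension (PresentedGroup relH) A B φ) := by
  intro relG relH A B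
  have relG_eq : relG = conjSubst true false '' relH := by
    simp [relG, relH, mul_assoc]
  let weight : Bool → Multiplicative ℤ := fun i => .ofAdd (if i then 1 else 2)
  have weight_relH : ∀ r ∈ relH, FreeGroup.lift weight r = 1 := by
    rintro _ rfl
    simp only [map_pow, map_mul, map_inv, FreeGroup.lift_apply_of]
    rfl
  have order_of_gen (i : Bool) : orderOf (PresentedGroup.of i : PresentedGroup relH) = 0 :=
    orderOf_presentedGroup_of_eq_zero weight_relH (by cases i <;> decide)
  obtain ⟨φ, hφ⟩ := exists_zpowers_mulEquiv_of_orderOf_eq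
    ((order_of_gen true).trans (order_of_gen false).symm)
  refine ⟨φ, hφ, ?_⟩
  rw [relG_eq]
  exact ⟨presentedGroupEquivHNNExtension (by decide) (congrArg Subtype.val hφ)⟩
end

section
/- Let X be a set with |X| > 1, let R be a nontrivial element of the free group on X which is not a proper power (R = Sᵏ with k ≥ 1 implies k = 1), and let n ≥ 1. Then the image of R in the presented group G = ⟨X; Rⁿ⟩ has order exactly n. In particular, G has a nontrivial element of finite order if and only if n > 1. -/
/-!
Magnus' method: induction on the length of `R`, proving at once that the generators of `⟨X; Rⁿ⟩`
other than one that occurs in the cyclically reduced form of `R` are free (the Freiheitssatz), that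
`R` has order `n`, and that `⟨X; R⟩` is torsion-free when `R` is not a proper power.

If some generator `t` occurring in `R` has exponent sum zero, rewrite a conjugate of `R` in the
conjugates `t ^ j * y * t ^ (-j)` of the other generators. This gives a shorter relator `r`, and
`⟨X; Rⁿ⟩` is an HNN extension with stable letter `t` of the one-relator group of `rⁿ`, whose
associated subgroups are free by the Freiheitssatz for `r`. Elements of finite order in an HNN
extension are conjugate into the base, so torsion-freeness is inherited, and so is the order of the
relator.

If no exponent sum vanishes, the order of `R` is visible in the abelianization. For the rest, the
substitution `x ↦ x * b ^ q`, `b ↦ b ^ p` makes the exponent sum of `b` vanish. It amounts to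
adjoining a `p`-th root of `b`, and a wreath product with `ℤ/p` containing such a root shows that
the substitution loses neither relations nor the property of not being a proper power.
-/

namespace OneRelator

/-- A group whose only element of finite order is the identity. (Mathlib's `IsMulTorsionFree`
asks for uniqueness of roots, which is stronger for nonabelian groups.) -/
def IsTorsionFree (G : Type*) [Group G] : Prop :=
  ∀ g : G, IsOfFinOrder g → g = 1

theorem IsTorsionFree.of_injective {G K : Type*} [Group G] [Group K] {f : G →* K}
    (hf : Function.Injective f) (hK : IsTorsionFree K) : IsTorsionFree G :=
  fun g hg => (map_eq_one_iff f hf).mp (hK (f g) (f.isOfFinOrder hg))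

section HNNTorsion

open HNNExtension

variable {G : Type*} [Group G] {A B : Subgroup G} {φ : A ≃* B}

theorem t_zpow_mul_of_mul_t_zpow_neg (u : ℤˣ) (g : toSubgroup A B u) :
    (t ^ (u : ℤ) * of (g : G) * t ^ (-(u : ℤ)) : HNNExtension G A B φ) =
      of (toSubgroupEquiv φ u g : G) := by
  rcases Int.units_eq_one_or u with rfl | rfl
  · simp only [Units.val_one, zpow_one, zpow_neg]
    exact (equiv_eq_conj g).symm
  · simp only [Units.val_neg, Units.val_one, zpow_neg, zpow_one, inv_inv]
    exact (equiv_symm_eq_conj g).symm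

theorem exists_reducedWord_prod_eq (x : HNNExtension G A B φ) :
    ∃ w : NormalWord.ReducedWord G A B, w.prod φ = x := by
  obtain ⟨d⟩ := NormalWord.TransversalPair.nonempty G A B
  refine ⟨(x • (NormalWord.empty : NormalWord d)).toReducedWord, ?_⟩
  rw [NormalWord.prod_smul, NormalWord.prod_empty, mul_one]

/-- The product in an HNN extension of a list of syllables, a syllable `(u, g)` standing for
`t ^ u * g`. -/
def syllableProd (φ : A ≃* B) (l : List (ℤˣ × G)) : HNNExtension G A B φ :=
  (l.map fun s => t ^ (s.1 : ℤ) * of s.2).prod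

variable (A B) in
/-- Two consecutive syllables `t ^ u * g` and `t ^ v * h` that do not form a pinch
`t ^ u * g * t ^ (-u)` with `g` in the associated subgroup. -/
def NoPinch (a b : ℤˣ × G) : Prop :=
  a.2 ∈ toSubgroup A B a.1 → a.1 = b.1

variable (A B) in
/-- A list of syllables without pinches, even when it is read cyclically. -/
structure IsCyclicallyReduced (l : List (ℤˣ × G)) : Prop where
  isChain : l.IsChain (NoPinch A B)
  noPinch_getLast_head : ∀ a ∈ l.getLast?, ∀ b ∈ l.head?, NoPinch A B a b

theorem IsCyclicallyReduced.not_isOfFinOrder {l : List (ℤˣ × G)} (hl : IsCyclicallyReduced A B l)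
    (hne : l ≠ []) : ¬ IsOfFinOrder (syllableProd φ l) := by
  rw [isOfFinOrder_iff_pow_eq_one]
  rintro ⟨k, hk, hpow⟩
  have hchain : (List.replicate k l).flatten.IsChain (NoPinch A B) := by
    rw [List.isChain_flatten fun h => hne (List.eq_of_mem_replicate h).symm]
    exact ⟨fun m hm => List.eq_of_mem_replicate hm ▸ hl.isChain,
      List.isChain_replicate_of_rel _ hl.noPinch_getLast_head⟩
  have hprod : NormalWord.ReducedWord.prod φ ⟨1, _, hchain⟩ = 1 := by
    simpa [NormalWord.ReducedWord.prod, List.map_flatten, List.prod_flatten, syllableProd]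
      using hpow
  have hnil := ReducedWord.toList_eq_nil_of_mem_of_range φ ⟨1, _, hchain⟩ (hprod ▸ one_mem _)
  simp only [List.flatten_eq_nil_iff] at hnil
  exact hne (hnil l (List.mem_replicate.mpr ⟨hk.ne', rfl⟩))

theorem isConj_prod_syllableProd {w : NormalWord.ReducedWord G A B} {l : List (ℤˣ × G)} {u : ℤˣ}
    {g : G} (hw : w.toList = l ++ [(u, g)]) :
    IsConj (w.prod φ) (syllableProd φ (l ++ [(u, g * w.head)])) :=
  isConj_iff.mpr ⟨(of w.head)⁻¹, by
    simp [NormalWord.ReducedWord.prod, hw, syllableProd, mul_assoc]⟩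

theorem exists_shorter_reducedWord_of_pinch {l : List (ℤˣ × G)} {u v : ℤˣ} {g h : G}
    (hl : ((v, h) :: l ++ [(u, g)]).IsChain (NoPinch A B)) (hpinch : ¬ NoPinch A B (u, g) (v, h)) :
    ∃ w : NormalWord.ReducedWord G A B, w.toList = l ∧
      IsConj (syllableProd φ ((v, h) :: l ++ [(u, g)])) (w.prod φ) := by
  obtain ⟨hg, huv⟩ : g ∈ toSubgroup A B u ∧ u ≠ v := by simpa [NoPinch] using hpinch
  obtain rfl : v = -u := Int.units_ne_iff_eq_neg.mp huv.symm
  refine ⟨⟨toSubgroupEquiv φ u ⟨g, hg⟩ * h, l, hl.left_of_append.tail⟩, rfl,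
    isConj_iff.mpr ⟨t ^ (u : ℤ) * of g, ?_⟩⟩
  simp [NormalWord.ReducedWord.prod, syllableProd, ← t_zpow_mul_of_mul_t_zpow_neg, mul_assoc]

theorem isConj_of_or_exists_isCyclicallyReduced (w : NormalWord.ReducedWord G A B) :
    (∃ g : G, IsConj (w.prod φ) (of g)) ∨
      ∃ l, l ≠ [] ∧ IsCyclicallyReduced A B l ∧ IsConj (w.prod φ) (syllableProd φ l) := by
  induction hn : w.toList.length using Nat.strong_induction_on generalizing w with
  | _ n ih =>
  rcases w.toList.eq_nil_or_concat' with hnil | ⟨l, ⟨u, g⟩, hw⟩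
  · have hprod : w.prod φ = of w.head := by simp [NormalWord.ReducedWord.prod, hnil]
    exact .inl ⟨w.head, hprod ▸ IsConj.refl _⟩
  have hconj := isConj_prod_syllableProd (φ := φ) hw
  have hchain : (l ++ [(u, g * w.head)]).IsChain (NoPinch A B) := by
    have hchain : (l ++ [(u, g)]).IsChain (NoPinch A B) := hw ▸ w.chain
    rw [List.isChain_append] at hchain ⊢
    simpa [NoPinch] using hchain
  by_cases hcyc : ∀ b ∈ (l ++ [(u, g * w.head)]).head?, NoPinch A B (u, g * w.head) b
  · exact .inr ⟨_, by simp, ⟨hchain, by simpa using hcyc⟩, hconj⟩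
  rcases l with _ | ⟨⟨v, h⟩, l⟩
  · simp [NoPinch] at hcyc
  obtain ⟨w', hw', hconj'⟩ :=
    exists_shorter_reducedWord_of_pinch (φ := φ) hchain (by simpa using hcyc)
  have hww' := hconj.trans hconj'
  rcases ih _ (by simp [← hn, hw, hw']) w' rfl with ⟨g, hg⟩ | ⟨m, hm, hred, hm'⟩
  · exact .inl ⟨g, hww'.trans hg⟩
  · exact .inr ⟨m, hm, hred, hww'.trans hm'⟩

theorem exists_isConj_of_of_isOfFinOrder {x : HNNExtension G A B φ} (hx : IsOfFinOrder x) :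
    ∃ g : G, IsConj x (of g) := by
  obtain ⟨w, rfl⟩ := exists_reducedWord_prod_eq x
  refine (isConj_of_or_exists_isCyclicallyReduced w).resolve_right ?_
  rintro ⟨l, hne, hl, hconj⟩
  exact hl.not_isOfFinOrder hne (hconj.isOfFinOrder hx)

theorem IsTorsionFree.hnnExtension (hG : IsTorsionFree G) :
    IsTorsionFree (HNNExtension G A B φ) := by
  intro x hx
  obtain ⟨g, hg⟩ := exists_isConj_of_of_isOfFinOrder hx
  have hg1 : g = 1 := hG g ((HNNExtension.of_injective φ).isOfFinOrder_iff.mp (hg.isOfFinOrder hx))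
  rwa [hg1, map_one, isConj_one_left] at hg

end HNNTorsion

section FreeGroup

open FreeGroup (of)

variable {X Y : Type*}

/-- An element of a group that is a `k`-th power for some `k ≥ 2`; in particular `1` is one. -/
def IsProperPower {G : Type*} [Group G] (g : G) : Prop :=
  ∃ (h : G) (k : ℕ), 2 ≤ k ∧ g = h ^ k

open scoped Classical in
/-- The generators occurring in the reduced word of an element of a free group. -/
def letters (w : FreeGroup X) : Set X :=
  {x | x ∈ w.toWord.map Prod.fst}

open scoped Classical in
/-- The length of the reduced word of an element of a free group: `FreeGroup.norm` with classical
decidability, so that no `DecidableEq` instance enters the statements. -/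
noncomputable def wordLength (w : FreeGroup X) : ℕ :=
  w.norm

theorem finite_letters (w : FreeGroup X) : (letters w).Finite :=
  List.finite_toSet _

open scoped Classical in
theorem map_eq_prod_toWord {G : Type*} [Group G] (f : FreeGroup X →* G) (w : FreeGroup X) :
    f w = (w.toWord.map fun s => cond s.2 (f (of s.1)) (f (of s.1))⁻¹).prod := by
  have hf : FreeGroup.lift (fun x => f (of x)) = f := FreeGroup.ext_hom _ _ fun x => by simp
  rw [← FreeGroup.lift_mk (f := fun x => f (of x)), FreeGroup.mk_toWord, hf]

theorem map_congr_of_letters {G : Type*} [Group G] {f g : FreeGroup X →* G} {w : FreeGroup X}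
    (h : ∀ x ∈ letters w, f (of x) = g (of x)) : f w = g w := by
  classical
  rw [map_eq_prod_toWord f, map_eq_prod_toWord g]
  congr 1
  exact List.map_congr_left fun s hs => by rw [h s.1 (List.mem_map_of_mem hs)]

theorem letters_nonempty {w : FreeGroup X} (hw : w ≠ 1) : (letters w).Nonempty := by
  by_contra hempty
  exact hw (map_congr_of_letters (f := MonoidHom.id _) (g := 1) fun x hx => (hempty ⟨x, hx⟩).elim)

theorem exists_eq_of_zpow {w : FreeGroup X} {x : X} (h : ∀ y ∈ letters w, y = x) :
    ∃ k : ℤ, w = of x ^ k := by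
  let exponent : FreeGroup X →* Multiplicative ℤ := FreeGroup.lift fun _ => Multiplicative.ofAdd 1
  refine ⟨(exponent w).toAdd, map_congr_of_letters (f := MonoidHom.id _)
    (g := (zpowersHom _ (of x)).comp exponent) fun y hy => ?_⟩
  simp [exponent, h y hy]

/-- A natural-number valued length function on a group. -/
structure IsLengthFunction {G : Type*} [Group G] (ℓ : G → ℕ) : Prop where
  map_one : ℓ 1 = 0
  map_mul_le : ∀ g h, ℓ (g * h) ≤ ℓ g + ℓ h
  map_inv : ∀ g, ℓ g⁻¹ = ℓ g

open scoped Classical in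
theorem isLengthFunction_wordLength : IsLengthFunction (wordLength (X := X)) where
  map_one := FreeGroup.norm_one
  map_mul_le := FreeGroup.norm_mul_le
  map_inv _ := FreeGroup.norm_inv_eq

open scoped Classical in
@[simp] theorem wordLength_of (x : X) : wordLength (of x) = 1 :=
  FreeGroup.norm_of x

namespace IsLengthFunction

variable {G H : Type*} [Group G] [Group H] {ℓ : G → ℕ}

theorem comp (hℓ : IsLengthFunction ℓ) (f : H →* G) : IsLengthFunction (ℓ ∘ f) where
  map_one := by simp [hℓ.map_one]
  map_mul_le g h := by simpa using hℓ.map_mul_le (f g) (f h)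
  map_inv g := by simp [hℓ.map_inv]

theorem list_prod_le (hℓ : IsLengthFunction ℓ) (L : List G) : ℓ L.prod ≤ (L.map ℓ).sum := by
  induction L with
  | nil => simp [hℓ.map_one]
  | cons g L ih =>
    rw [List.prod_cons, List.map_cons, List.sum_cons]
    exact (hℓ.map_mul_le _ _).trans (Nat.add_le_add_left ih _)

variable {ℓ : FreeGroup X → ℕ}

open scoped Classical in
theorem le_sum_toWord (hℓ : IsLengthFunction ℓ) (w : FreeGroup X) :
    ℓ w ≤ (w.toWord.map fun s => ℓ (of s.1)).sum := by
  have hprod := map_eq_prod_toWord (MonoidHom.id _) w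
  have hle := hℓ.list_prod_le (w.toWord.map fun s => cond s.2 (of s.1) (of s.1)⁻¹)
  simp only [MonoidHom.id_apply] at hprod
  rw [← hprod, List.map_map] at hle
  refine hle.trans_eq (congrArg List.sum (List.map_congr_left fun s _ => ?_))
  rcases s with ⟨x, _ | _⟩ <;> simp [hℓ.map_inv]

theorem le_wordLength (hℓ : IsLengthFunction ℓ) (hle : ∀ x, ℓ (of x) ≤ 1) (w : FreeGroup X) :
    ℓ w ≤ wordLength w := by
  classical
  refine (hℓ.le_sum_toWord w).trans ((List.sum_le_card_nsmul _ 1 ?_).trans_eq ?_)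
  · simpa using fun x _ => hle x
  · simp [wordLength, FreeGroup.norm]

theorem lt_wordLength (hℓ : IsLengthFunction ℓ) (hle : ∀ x, ℓ (of x) ≤ 1) {w : FreeGroup X}
    {x : X} (hx : x ∈ letters w) (hzero : ℓ (of x) = 0) : ℓ w < wordLength w := by
  classical
  obtain ⟨s, hs, rfl⟩ := List.mem_map.mp hx
  refine (hℓ.le_sum_toWord w).trans_lt ((List.sum_lt_sum _ (fun _ => 1) (fun s _ => hle s.1)
    ⟨s, hs, by simp [hzero]⟩).trans_eq ?_)
  simp [wordLength, FreeGroup.norm]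

end IsLengthFunction

theorem wordLength_map_le (f : X → Y) (w : FreeGroup X) :
    wordLength (FreeGroup.map f w) ≤ wordLength w :=
  (isLengthFunction_wordLength.comp (FreeGroup.map f)).le_wordLength (by simp) w

theorem exists_map_val_eq {P : X → Prop} {w : FreeGroup X} (h : ∀ x ∈ letters w, P x) :
    ∃ v : FreeGroup {x // P x}, FreeGroup.map Subtype.val v = w ∧ wordLength v ≤ wordLength w := by
  classical
  let f : FreeGroup X →* FreeGroup {x // P x} :=
    FreeGroup.lift fun x => if hx : P x then of ⟨x, hx⟩ else 1
  refine ⟨f w, ?_, (isLengthFunction_wordLength.comp f).le_wordLength (fun x => ?_) w⟩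
  · exact map_congr_of_letters (f := (FreeGroup.map Subtype.val).comp f) (g := MonoidHom.id _)
      fun x hx => by simp [f, h x hx]
  · by_cases hx : P x <;> simp [f, hx, isLengthFunction_wordLength.map_one]

open scoped Classical in
/-- The endomorphism of a free group that replaces the generator `x` by `g`. -/
noncomputable def substGen (x : X) (g : FreeGroup X) : FreeGroup X →* FreeGroup X :=
  FreeGroup.lift (Function.update of x g)

@[simp] theorem substGen_of_self (x : X) (g : FreeGroup X) : substGen x g (of x) = g := by
  simp [substGen]

@[simp] theorem substGen_of_of_ne {x y : X} (h : y ≠ x) (g : FreeGroup X) :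
    substGen x g (of y) = of y := by
  simp [substGen, h]

theorem substGen_eq_self {x : X} {w : FreeGroup X} (hx : x ∉ letters w) (g : FreeGroup X) :
    substGen x g w = w :=
  map_congr_of_letters (g := MonoidHom.id _) fun y hy => by
    simp [show y ≠ x from fun h => hx (h ▸ hy)]

theorem wordLength_substGen_one_lt {x : X} {w : FreeGroup X} (hx : x ∈ letters w) :
    wordLength (substGen x 1 w) < wordLength w := by
  refine (isLengthFunction_wordLength.comp (substGen x 1)).lt_wordLength (fun y => ?_) hx ?_
  · rcases eq_or_ne y x with rfl | hy <;> simp [isLengthFunction_wordLength.map_one, *]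
  · simp [isLengthFunction_wordLength.map_one]

theorem notMem_letters_iff {x : X} {w : FreeGroup X} : x ∉ letters w ↔ substGen x 1 w = w :=
  ⟨fun hx => substGen_eq_self hx 1, fun h hx => (wordLength_substGen_one_lt hx).ne (by rw [h])⟩

theorem notMem_letters_map {f : FreeGroup X →* FreeGroup Y} {y : Y} {w : FreeGroup X}
    (h : ∀ x ∈ letters w, y ∉ letters (f (of x))) : y ∉ letters (f w) :=
  notMem_letters_iff.mpr <| map_congr_of_letters (f := (substGen y 1).comp f) fun x hx =>
    notMem_letters_iff.mp (h x hx)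

@[simp] theorem letters_of (x : X) : letters (of x) = {x} := by
  ext y
  simp [letters]

@[simp] theorem letters_one : letters (1 : FreeGroup X) = ∅ := by
  simp [letters]

theorem mem_letters_map_iff {f : X → Y} (hf : Function.Injective f) {x : X} {w : FreeGroup X} :
    f x ∈ letters (FreeGroup.map f w) ↔ x ∈ letters w := by
  have hcomp : (substGen (f x) 1).comp (FreeGroup.map f) = (FreeGroup.map f).comp (substGen x 1) :=
    FreeGroup.ext_hom _ _ fun y => by
      rcases eq_or_ne y x with rfl | hy <;> simp [hf.ne_iff, *]
  rw [← not_iff_not, notMem_letters_iff, notMem_letters_iff,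
    show substGen (f x) 1 (FreeGroup.map f w) = _ from DFunLike.congr_fun hcomp w]
  exact (FreeGroup.map_injective hf).eq_iff

/-- `Involves R x` says that the generator `x` occurs in every conjugate of `R`, i.e. in the
cyclically reduced form of `R`. -/
def Involves (R : FreeGroup X) (x : X) : Prop :=
  ∀ R', IsConj R R' → x ∈ letters R'

theorem isConj_substGen_one_of_not_involves {R : FreeGroup X} {x : X} (h : ¬ Involves R x) :
    IsConj R (substGen x 1 R) := by
  simp only [Involves, not_forall, exists_prop] at h
  obtain ⟨R', hconj, hx⟩ := h
  have hmap := (substGen x 1).map_isConj hconj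
  rw [notMem_letters_iff.mp hx] at hmap
  exact hconj.trans hmap.symm

open scoped Classical in
/-- The exponent sum of the generator `x`. -/
noncomputable def exponentSum (x : X) : FreeGroup X →* Multiplicative ℤ :=
  FreeGroup.lift (Pi.mulSingle x (Multiplicative.ofAdd 1))

@[simp] theorem exponentSum_of_self (x : X) :
    exponentSum x (of x) = Multiplicative.ofAdd 1 := by
  simp [exponentSum]

@[simp] theorem exponentSum_of_of_ne {x y : X} (h : y ≠ x) : exponentSum x (of y) = 1 := by
  simp [exponentSum, h]

theorem exponentSum_eq_one_of_notMem_letters {x : X} {w : FreeGroup X} (hx : x ∉ letters w) :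
    exponentSum x w = 1 :=
  map_congr_of_letters (g := 1) fun y hy => by simp [show y ≠ x from fun h => hx (h ▸ hy)]

theorem involves_of_exponentSum_ne_one {R : FreeGroup X} {x : X} (h : exponentSum x R ≠ 1) :
    Involves R x := by
  intro R' hconj
  by_contra hx
  have hmap := (exponentSum x).map_isConj hconj
  rw [exponentSum_eq_one_of_notMem_letters hx, isConj_one_left] at hmap
  exact h hmap

end FreeGroup

section Relator

open FreeGroup (of)
open PresentedGroup (mk)

variable {X Y : Type*} {K : Type*} [Group K]

theorem mk_relator (R : FreeGroup X) : mk {R} R = 1 :=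
  PresentedGroup.one_of_mem (Set.mem_singleton R)

/-- The homomorphism out of `⟨X; R⟩` induced by a homomorphism of the free group that kills `R`. -/
def descend {R : FreeGroup X} (f : FreeGroup X →* K) (hf : f R = 1) : PresentedGroup {R} →* K :=
  QuotientGroup.lift _ f <| Subgroup.normalClosure_le_normal <| by simpa using hf

@[simp] theorem descend_mk {R : FreeGroup X} (f : FreeGroup X →* K) (hf : f R = 1)
    (w : FreeGroup X) : descend f hf (mk {R} w) = f w :=
  rfl

theorem map_eq_one_of_mk_eq_one {R w : FreeGroup X} (f : FreeGroup X →* K) (hf : f R = 1)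
    (hw : mk {R} w = 1) : f w = 1 := by
  rw [← descend_mk f hf, hw, map_one]

theorem mk_map_eq_one {R w : FreeGroup X} (f : FreeGroup X →* FreeGroup Y)
    (hw : mk {R} w = 1) : mk {f R} (f w) = 1 :=
  map_eq_one_of_mk_eq_one ((mk {f R}).comp f) (mk_relator (f R)) hw

theorem mk_eq_one_of_mk_map_eq_one {f : FreeGroup X →* FreeGroup Y} {g : FreeGroup Y →* FreeGroup X}
    (hgf : Function.LeftInverse g f) {R w : FreeGroup X} (hw : mk {f R} (f w) = 1) :
    mk {R} w = 1 := by
  have hgw := mk_map_eq_one g hw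
  rwa [hgf, hgf] at hgw

theorem isTorsionFree_of_hom {R : FreeGroup X} {f : FreeGroup X →* K} (hf : f R = 1)
    (hmk : ∀ w, f w = 1 → mk {R} w = 1) (hK : IsTorsionFree K) :
    IsTorsionFree (PresentedGroup {R}) := by
  refine hK.of_injective (f := descend f hf) ((injective_iff_map_eq_one _).mpr fun g hg => ?_)
  obtain ⟨w, rfl⟩ := PresentedGroup.mk_surjective _ g
  exact hmk w hg

theorem map_eq_one_of_isConj {R R' : FreeGroup X} (h : IsConj R R') {f : FreeGroup X →* K}
    (hf : f R = 1) : f R' = 1 := by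
  have hmap := f.map_isConj h
  rwa [hf, isConj_one_right] at hmap

theorem mk_eq_one_iff_of_isConj {R R' : FreeGroup X} (h : IsConj R R') {w : FreeGroup X} :
    mk {R} w = 1 ↔ mk {R'} w = 1 :=
  ⟨fun hw => map_eq_one_of_mk_eq_one _ (map_eq_one_of_isConj h.symm (mk_relator R')) hw,
    fun hw => map_eq_one_of_mk_eq_one _ (map_eq_one_of_isConj h (mk_relator R)) hw⟩

theorem orderOf_mk_of_not_isOfFinOrder {A : Type*} [CommGroup A] {R : FreeGroup X}
    {f : FreeGroup X →* A} (hf : ¬ IsOfFinOrder (f R)) (n : ℕ) :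
    orderOf (mk {R ^ n} R) = n := by
  refine Nat.dvd_antisymm (orderOf_dvd_of_pow_eq_one (by rw [← map_pow, mk_relator])) ?_
  set m := orderOf (mk {R ^ n} R)
  have hm : mk {R ^ n} (R ^ m) = 1 := by rw [map_pow, pow_orderOf_eq_one]
  have hquot := map_eq_one_of_mk_eq_one ((QuotientGroup.mk' (Subgroup.zpowers (f (R ^ n)))).comp f)
    ((QuotientGroup.eq_one_iff _).mpr (Subgroup.mem_zpowers _)) hm
  have hmem : f (R ^ m) ∈ Subgroup.zpowers (f (R ^ n)) := (QuotientGroup.eq_one_iff _).mp hquot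
  obtain ⟨j, hj⟩ := Subgroup.mem_zpowers_iff.mp hmem
  rw [map_pow, map_pow, ← zpow_natCast, ← zpow_natCast, ← zpow_mul] at hj
  exact Int.natCast_dvd_natCast.mp ⟨j, (injective_zpow_iff_not_isOfFinOrder.mpr hf hj).symm⟩

end Relator

section Roots

open FreeGroup (of)
open PresentedGroup (mk)

variable {X H : Type*} [Group H]

/-- The inclusion of the base group in the wreath product `H ≀ᵣ Q`. -/
def wreathBase (H Q : Type*) [Group H] [Group Q] : (Q → H) →* RegularWreathProduct H Q where
  toFun f := ⟨f, 1⟩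
  map_one' := rfl
  map_mul' f g := by ext <;> simp

variable (p : ℕ) [NeZero p]

theorem wreath_mulSingle_pow (h : H) {j : ℕ} (hj : j ≤ p) :
    (⟨Pi.mulSingle 1 h, Multiplicative.ofAdd 1⟩ :
      RegularWreathProduct H (Multiplicative (ZMod p))) ^ j =
      ⟨fun q => if q.toAdd.val < j then h else 1, Multiplicative.ofAdd (j : ZMod p)⟩ := by
  induction j with
  | zero => ext <;> simp
  | succ j ih =>
    have hval (q : Multiplicative (ZMod p)) :
        (Multiplicative.ofAdd (j : ZMod p))⁻¹ * q = 1 ↔ q.toAdd.val = j := by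
      rw [inv_mul_eq_one, ← Multiplicative.toAdd.injective.eq_iff, toAdd_ofAdd,
        ← (ZMod.val_injective p).eq_iff, ZMod.val_cast_of_lt (Nat.lt_of_succ_le hj), eq_comm]
    rw [pow_succ, ih (Nat.le_of_succ_le hj)]
    ext q
    · simp only [RegularWreathProduct.mul_left, Pi.mul_apply, Pi.mulSingle_apply, hval]
      split_ifs <;> first | omega | simp
    · simp [ofAdd_add]

theorem exists_pow_eq_wreathBase_const (h : H) :
    ∃ T : RegularWreathProduct H (Multiplicative (ZMod p)),
      T ^ p = wreathBase H (Multiplicative (ZMod p)) fun _ => h :=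
  ⟨_, (wreath_mulSingle_pow p h le_rfl).trans <| by ext <;> simp [wreathBase, ZMod.val_lt]⟩

theorem exists_comp_substGen_pow_eq_wreathBase (f g : FreeGroup X →* H) {b : X}
    (hb : f (of b) = g (of b)) :
    ∃ Φ : FreeGroup X →* RegularWreathProduct H (Multiplicative (ZMod p)),
      ∀ w, Φ (substGen b (of b ^ p) w) =
        wreathBase H (Multiplicative (ZMod p)) fun q => if q = 1 then f w else g w := by
  classical
  obtain ⟨T, hT⟩ := exists_pow_eq_wreathBase_const p (f (of b))
  let base : FreeGroup X →* RegularWreathProduct H (Multiplicative (ZMod p)) :=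
    (wreathBase H _).comp (MonoidHom.pi fun q => if q = 1 then f else g)
  have hbase (w : FreeGroup X) : base w = wreathBase H _ fun q => if q = 1 then f w else g w := by
    refine congrArg (wreathBase H _) (funext fun q => ?_)
    change (if q = 1 then f else g) w = _
    split_ifs <;> rfl
  let Φ := FreeGroup.lift (Function.update (fun x => base (of x)) b T)
  have hΦ : Φ.comp (substGen b (of b ^ p)) = base := FreeGroup.ext_hom _ _ fun x => by
    rcases eq_or_ne x b with rfl | hx
    · simp [Φ, hT, hbase, hb]
    · simp [Φ, hx]
  exact ⟨Φ, fun w => (DFunLike.congr_fun hΦ w).trans (hbase w)⟩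

theorem wreathBase_injective (H Q : Type*) [Group H] [Group Q] :
    Function.Injective (wreathBase H Q) :=
  fun _ _ h => congrArg RegularWreathProduct.left h

theorem substGen_pow_injective (b : X) : Function.Injective (substGen b (of b ^ p)) := by
  obtain ⟨Φ, hΦ⟩ := exists_comp_substGen_pow_eq_wreathBase p (MonoidHom.id _) (MonoidHom.id _)
    (b := b) rfl
  intro v w hvw
  have hbase := wreathBase_injective _ _ ((hΦ v).symm.trans ((congrArg Φ hvw).trans (hΦ w)))
  simpa using congrFun hbase 1

theorem mk_eq_one_of_mk_substGen_pow_eq_one {b : X} {R w : FreeGroup X}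
    (hw : mk {substGen b (of b ^ p) R} (substGen b (of b ^ p) w) = 1) : mk {R} w = 1 := by
  obtain ⟨Φ, hΦ⟩ := exists_comp_substGen_pow_eq_wreathBase p (mk {R}) (mk {R}) (b := b) rfl
  have hR : Φ (substGen b (of b ^ p) R) = 1 := by
    rw [hΦ, mk_relator]
    simp only [ite_self]
    exact map_one _
  have hbase := (hΦ w).symm.trans (map_eq_one_of_mk_eq_one Φ hR hw)
  simpa using congrFun (wreathBase_injective _ _ (hbase.trans (map_one _).symm)) 1

theorem isProperPower_of_substGen_pow {x b : X} (hxb : x ≠ b) {R : FreeGroup X}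
    (hx : exponentSum x R ≠ 1) (hR : IsProperPower (substGen b (of b ^ p) R)) :
    IsProperPower R := by
  obtain ⟨S, k, hk, hS⟩ := hR
  let g : FreeGroup X →* FreeGroup X := (zpowersHom _ (of b)).comp (exponentSum b)
  obtain ⟨Φ, hΦ⟩ := exists_comp_substGen_pow_eq_wreathBase p (MonoidHom.id _) g (b := b)
    (by simp [g])
  have hpow := hΦ R
  rw [hS, map_pow] at hpow
  by_cases hright : (Φ S).right = 1
  · refine ⟨(Φ S).left 1, k, hk, ?_⟩
    have hleft : Φ S = wreathBase _ _ (Φ S).left := by ext <;> simp [wreathBase, hright]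
    rw [hleft, ← map_pow] at hpow
    simpa using (congrFun (wreathBase_injective _ _ hpow) 1).symm
  · -- `Φ S` commutes with its power and lies outside the base group, so it permutes the coordinates
    -- of that power and makes `R` conjugate to `g R`, a power of `b`.
    have hcomm := (Commute.refl (Φ S)).pow_right k
    rw [hpow] at hcomm
    have hconj := congrFun (congrArg RegularWreathProduct.left hcomm.eq) (Φ S).right
    simp only [wreathBase, MonoidHom.coe_mk, OneHom.coe_mk, RegularWreathProduct.mul_left,
      Pi.mul_apply, inv_mul_cancel, if_true, if_neg hright, MonoidHom.id_apply, inv_one, one_mul]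
      at hconj
    have hsum := congrArg (exponentSum x) hconj
    rw [map_mul, map_mul, mul_comm, mul_left_inj] at hsum
    refine absurd (hsum.trans ?_) hx
    simp [g, hxb.symm]

end Roots

section HNNOfInjections

open HNNExtension (of t)

variable {P H L : Type*} [Group P] [Group H] [Group L] {f₀ f₁ : P →* H}

/-- The isomorphism `f₀ p ↦ f₁ p` between the ranges of two injective homomorphisms, along which an
HNN extension can be formed. -/
noncomputable def rangeEquiv (h₀ : Function.Injective f₀) (h₁ : Function.Injective f₁) :
    f₀.range ≃* f₁.range :=
  (MonoidHom.ofInjective h₀).symm.trans (MonoidHom.ofInjective h₁)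

variable {h₀ : Function.Injective f₀} {h₁ : Function.Injective f₁}

theorem coe_rangeEquiv_rangeRestrict (p : P) :
    (rangeEquiv h₀ h₁ (f₀.rangeRestrict p) : H) = f₁ p := by
  have hsymm : (MonoidHom.ofInjective h₀).symm (f₀.rangeRestrict p) = p :=
    (MulEquiv.symm_apply_eq _).mpr rfl
  rw [rangeEquiv, MulEquiv.trans_apply, hsymm]
  rfl

theorem t_mul_of_mul_inv_t (p : P) :
    (t * of (f₀ p) * t⁻¹ : HNNExtension H f₀.range f₁.range (rangeEquiv h₀ h₁)) = of (f₁ p) := by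
  rw [mul_inv_eq_iff_eq_mul, ← coe_rangeEquiv_rangeRestrict (h₀ := h₀) (h₁ := h₁) p]
  exact HNNExtension.t_mul_of (f₀.rangeRestrict p)

theorem exists_hnnExtension_lift {f : H →* L} {x : L} (hx : ∀ p, x * f (f₀ p) * x⁻¹ = f (f₁ p)) :
    ∃ g : HNNExtension H f₀.range f₁.range (rangeEquiv h₀ h₁) →* L,
      (∀ h, g (of h) = f h) ∧ g t = x := by
  refine ⟨HNNExtension.lift f x fun a => ?_, fun _ => HNNExtension.lift_of ..,
    HNNExtension.lift_t ..⟩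
  obtain ⟨p, rfl⟩ := f₀.rangeRestrict_surjective a
  rw [coe_rangeEquiv_rangeRestrict, ← mul_inv_eq_iff_eq_mul]
  exact hx p

end HNNOfInjections

section Rewriting

open FreeGroup (of)

variable {X : Type*}

/-- The generators of the kernel of `exponentSum t`: the pair `(y, j)` stands for
`t ^ j * y * t ^ (-j)`. -/
abbrev KernelGen (t : X) : Type _ :=
  {y : X // y ≠ t} × ℤ

/-- The inclusion of the kernel of `exponentSum t` in the free group, on the free generators
`KernelGen t`. -/
def kernelIncl (t : X) : FreeGroup (KernelGen t) →* FreeGroup X :=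
  FreeGroup.lift fun p => of t ^ p.2 * of p.1.1 * (of t ^ p.2)⁻¹

variable {t : X}

@[simp] theorem kernelIncl_of (p : KernelGen t) :
    kernelIncl t (of p) = of t ^ p.2 * of p.1.1 * (of t ^ p.2)⁻¹ :=
  FreeGroup.lift_apply_of

/-- Conjugation by the powers of `t`, as an action on the kernel of `exponentSum t`. -/
def shift (t : X) : Multiplicative ℤ →* MulAut (FreeGroup (KernelGen t)) :=
  MonoidHom.mk' (fun k => FreeGroup.freeGroupCongr
      ((Equiv.refl _).prodCongr (Equiv.addLeft k.toAdd))) fun k l => by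
    refine MulEquiv.toMonoidHom_injective (FreeGroup.ext_hom _ _ fun p => ?_)
    simp [Prod.map, add_assoc]

theorem shift_eq_map (k : Multiplicative ℤ) (w : FreeGroup (KernelGen t)) :
    shift t k w = FreeGroup.map (Prod.map id (k.toAdd + ·)) w :=
  rfl

theorem kernelIncl_shift (k : Multiplicative ℤ) (w : FreeGroup (KernelGen t)) :
    kernelIncl t (shift t k w) = of t ^ k.toAdd * kernelIncl t w * (of t ^ k.toAdd)⁻¹ := by
  have hcomp : (kernelIncl t).comp (shift t k).toMonoidHom =
      (MulAut.conj (of t ^ k.toAdd)).toMonoidHom.comp (kernelIncl t) :=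
    FreeGroup.ext_hom _ _ fun p => by simp [shift_eq_map, zpow_add, mul_assoc, -map_zpow]
  exact DFunLike.congr_fun hcomp w

theorem wordLength_shift_le (k : Multiplicative ℤ) (w : FreeGroup (KernelGen t)) :
    wordLength (shift t k w) ≤ wordLength w :=
  wordLength_map_le _ w

open scoped Classical in
/-- The Reidemeister–Schreier rewriting process for the kernel of `exponentSum t`. -/
noncomputable def rewrite (t : X) :
    FreeGroup X →* FreeGroup (KernelGen t) ⋊[shift t] Multiplicative ℤ :=
  FreeGroup.lift fun x =>
    if hx : x = t then SemidirectProduct.inr (Multiplicative.ofAdd 1)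
    else SemidirectProduct.inl (of (⟨x, hx⟩, 0))

@[simp] theorem rewrite_of_self :
    rewrite t (of t) = SemidirectProduct.inr (Multiplicative.ofAdd 1) := by
  simp [rewrite]

@[simp] theorem rewrite_of_of_ne {x : X} (hx : x ≠ t) :
    rewrite t (of x) = SemidirectProduct.inl (of (⟨x, hx⟩, 0)) := by
  simp [rewrite, hx]

theorem right_rewrite (g : FreeGroup X) : (rewrite t g).right = exponentSum t g := by
  have hcomp : SemidirectProduct.rightHom.comp (rewrite t) = exponentSum t :=
    FreeGroup.ext_hom _ _ fun x => by rcases eq_or_ne x t with rfl | hx <;> simp [*]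
  exact DFunLike.congr_fun hcomp g

theorem kernelIncl_left_rewrite {g : FreeGroup X} (hg : exponentSum t g = 1) :
    kernelIncl t (rewrite t g).left = g := by
  let unwind : FreeGroup (KernelGen t) ⋊[shift t] Multiplicative ℤ →* FreeGroup X :=
    SemidirectProduct.lift (kernelIncl t) (zpowersHom _ (of t)) fun k =>
      MonoidHom.ext fun w => by simp [kernelIncl_shift, -map_zpow]
  have hcomp : unwind.comp (rewrite t) = MonoidHom.id _ :=
    FreeGroup.ext_hom _ _ fun x => by rcases eq_or_ne x t with rfl | hx <;> simp [unwind, *]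
  calc kernelIncl t (rewrite t g).left = unwind (rewrite t g) := by
        simp [unwind, SemidirectProduct.lift, right_rewrite, hg]
    _ = g := DFunLike.congr_fun hcomp g

/-- The number of letters other than `t` in a word, computed as the length of its rewriting. -/
noncomputable def lengthAwayFrom (t : X) (g : FreeGroup X) : ℕ :=
  wordLength (rewrite t g).left

theorem isLengthFunction_lengthAwayFrom : IsLengthFunction (lengthAwayFrom t) where
  map_one := by simp [lengthAwayFrom, isLengthFunction_wordLength.map_one]
  map_mul_le g h := by
    rw [lengthAwayFrom, map_mul, SemidirectProduct.mul_left]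
    exact (isLengthFunction_wordLength.map_mul_le _ _).trans
      (Nat.add_le_add_left (wordLength_shift_le _ _) _)
  map_inv g := by
    have hle (g : FreeGroup X) : lengthAwayFrom t g⁻¹ ≤ lengthAwayFrom t g := by
      rw [lengthAwayFrom, map_inv, SemidirectProduct.inv_left]
      exact (wordLength_shift_le _ _).trans_eq (isLengthFunction_wordLength.map_inv _)
    exact (hle g).antisymm (by simpa using hle g⁻¹)

@[simp] theorem lengthAwayFrom_of_self : lengthAwayFrom t (of t) = 0 := by
  simp [lengthAwayFrom, isLengthFunction_wordLength.map_one]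

@[simp] theorem lengthAwayFrom_of_of_ne {x : X} (hx : x ≠ t) : lengthAwayFrom t (of x) = 1 := by
  simp [lengthAwayFrom, hx]

theorem exists_kernelIncl_eq {g : FreeGroup X} (hg : exponentSum t g = 1) :
    ∃ w, kernelIncl t w = g ∧ wordLength w = lengthAwayFrom t g :=
  ⟨(rewrite t g).left, kernelIncl_left_rewrite hg, rfl⟩

theorem exponentSum_kernelIncl (w : FreeGroup (KernelGen t)) :
    exponentSum t (kernelIncl t w) = 1 := by
  have hcomp : (exponentSum t).comp (kernelIncl t) = 1 :=
    FreeGroup.ext_hom _ _ fun p => by simp [p.1.2]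
  exact DFunLike.congr_fun hcomp w

end Rewriting

section MagnusHNN

open FreeGroup (of)
open PresentedGroup (mk)

variable {X : Type*} {t : X} {a y : {y : X // y ≠ t}} {N : ℕ}

/-- The generators `t ^ j * y * t ^ (-j)` in which `j` is restricted to `0 ≤ j < N` when `y = a`
and is arbitrary otherwise. -/
abbrev Window (a : {y : X // y ≠ t}) (N : ℕ) : Type _ :=
  {p : KernelGen t // p.1 = a → 0 ≤ p.2 ∧ p.2 < N}

namespace Window

/-- The inclusion of a window in the next larger one. -/
def castSucc (p : Window a N) : Window a (N + 1) :=
  ⟨p.1, fun h => by have := p.2 h; push_cast; omega⟩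

/-- The map of windows induced by conjugation by `t`. -/
def succ (p : Window a N) : Window a (N + 1) :=
  ⟨(p.1.1, 1 + p.1.2), fun h => by have := p.2 h; push_cast; omega⟩

/-- The generator `y` itself. -/
def base (a y : {y : X // y ≠ t}) (N : ℕ) : Window a (N + 1) :=
  ⟨(y, 0), fun _ => ⟨le_rfl, Int.natCast_pos.mpr N.succ_pos⟩⟩

/-- The generator `t ^ N * a * t ^ (-N)`. -/
def last (a : {y : X // y ≠ t}) (N : ℕ) : Window a (N + 1) :=
  ⟨(a, N), fun _ => by push_cast; omega⟩

theorem castSucc_injective : Function.Injective (castSucc : Window a N → Window a (N + 1)) :=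
  fun p q h => Subtype.ext (show p.1 = q.1 from congrArg (Subtype.val : Window a (N + 1) → _) h)

theorem succ_injective : Function.Injective (succ : Window a N → Window a (N + 1)) := by
  intro p q h
  have hval := congrArg Subtype.val h
  simp only [succ, Prod.mk.injEq, add_right_inj] at hval
  exact Subtype.ext (Prod.ext hval.1 hval.2)

theorem last_ne_castSucc (p : Window a N) : last a N ≠ castSucc p := by
  intro h
  have hval : (a, (N : ℤ)) = p.1 := congrArg Subtype.val h
  have hp := p.2 (congrArg Prod.fst hval).symm
  rw [← hval] at hp
  omega

theorem base_ne_succ (p : Window a N) : base a a N ≠ succ p := by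
  intro h
  have hval := congrArg Subtype.val h
  simp only [base, succ, Prod.mk.injEq] at hval
  have hp := p.2 hval.1.symm
  omega

end Window

/-- The inclusion in `FreeGroup X` of the subgroup generated by a window. -/
def windowIncl (a : {y : X // y ≠ t}) (N : ℕ) : FreeGroup (Window a N) →* FreeGroup X :=
  (kernelIncl t).comp (FreeGroup.map Subtype.val)

@[simp] theorem windowIncl_of (p : Window a N) :
    windowIncl a N (of p) = of t ^ p.1.2 * of p.1.1.1 * (of t ^ p.1.2)⁻¹ := by
  simp [windowIncl]

theorem windowIncl_succ (v : FreeGroup (Window a N)) :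
    windowIncl a (N + 1) (FreeGroup.map Window.succ v) =
      of t * windowIncl a (N + 1) (FreeGroup.map Window.castSucc v) * (of t)⁻¹ := by
  have hcomp : (windowIncl a (N + 1)).comp (FreeGroup.map Window.succ) =
      (MulAut.conj (of t)).toMonoidHom.comp
        ((windowIncl a (N + 1)).comp (FreeGroup.map Window.castSucc)) :=
    FreeGroup.ext_hom _ _ fun p => by
      simp [Window.succ, Window.castSucc, zpow_add, mul_assoc, -map_zpow, -map_mul]
  exact DFunLike.congr_fun hcomp v

/-- The homomorphism from the free group on the smaller window to `⟨Window a (N + 1); r⟩`; by the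
Freiheitssatz its image is a Magnus subgroup. -/
def lowerHom (r : FreeGroup (Window a (N + 1))) :
    FreeGroup (Window a N) →* PresentedGroup {r} :=
  (mk {r}).comp (FreeGroup.map Window.castSucc)

/-- The homomorphism `lowerHom`, shifted by one. -/
def upperHom (r : FreeGroup (Window a (N + 1))) :
    FreeGroup (Window a N) →* PresentedGroup {r} :=
  (mk {r}).comp (FreeGroup.map Window.succ)

@[simp] theorem lowerHom_of (r : FreeGroup (Window a (N + 1))) (p : Window a N) :
    lowerHom r (of p) = mk {r} (of p.castSucc) := by
  simp [lowerHom]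

@[simp] theorem upperHom_of (r : FreeGroup (Window a (N + 1))) (p : Window a N) :
    upperHom r (of p) = mk {r} (of p.succ) := by
  simp [upperHom]

theorem lowerHom_injective {r : FreeGroup (Window a (N + 1))}
    (hlast : ∀ w, Window.last a N ∉ letters w → mk {r} w = 1 → w = 1) :
    Function.Injective (lowerHom r) := by
  refine (injective_iff_map_eq_one _).mpr fun v hv => ?_
  refine (injective_iff_map_eq_one _).mp (FreeGroup.map_injective Window.castSucc_injective) v
    (hlast _ (notMem_letters_map fun p _ => ?_) hv)
  simpa using Window.last_ne_castSucc p

theorem upperHom_injective {r : FreeGroup (Window a (N + 1))}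
    (hbase : ∀ w, Window.base a a N ∉ letters w → mk {r} w = 1 → w = 1) :
    Function.Injective (upperHom r) := by
  refine (injective_iff_map_eq_one _).mpr fun v hv => ?_
  refine (injective_iff_map_eq_one _).mp (FreeGroup.map_injective Window.succ_injective) v
    (hbase _ (notMem_letters_map fun p _ => ?_) hv)
  simpa using Window.base_ne_succ p

variable {r : FreeGroup (Window a (N + 1))}

/-- The HNN extension of `⟨Window a (N + 1); r⟩` that identifies the subgroup generated by
`Window a N` with its shift. It is the one-relator group `⟨X; windowIncl a (N + 1) r⟩`. -/
abbrev MagnusExtension (h₀ : Function.Injective (lowerHom r))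
    (h₁ : Function.Injective (upperHom r)) : Type _ :=
  HNNExtension (PresentedGroup {r}) _ _ (rangeEquiv h₀ h₁)

variable (h₀ : Function.Injective (lowerHom r)) (h₁ : Function.Injective (upperHom r))

open scoped Classical in
/-- The homomorphism to the HNN extension that sends `t` to the stable letter. -/
noncomputable def toMagnusExtension : FreeGroup X →* MagnusExtension h₀ h₁ :=
  FreeGroup.lift fun x =>
    if hx : x = t then HNNExtension.t
    else HNNExtension.of (mk {r} (of (Window.base a ⟨x, hx⟩ N)))

@[simp] theorem toMagnusExtension_of_self : toMagnusExtension h₀ h₁ (of t) = HNNExtension.t := by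
  simp [toMagnusExtension]

@[simp] theorem toMagnusExtension_of_coe (y : {y : X // y ≠ t}) :
    toMagnusExtension h₀ h₁ (of y.1) = HNNExtension.of (mk {r} (of (Window.base a y N))) := by
  simp [toMagnusExtension, y.2]

theorem t_mul_of_castSucc (p : Window a N) :
    (HNNExtension.t * HNNExtension.of (mk {r} (of p.castSucc)) * HNNExtension.t⁻¹ :
      MagnusExtension h₀ h₁) = HNNExtension.of (mk {r} (of p.succ)) := by
  simpa using t_mul_of_mul_inv_t (h₀ := h₀) (h₁ := h₁) (of p)

theorem t_zpow_mul_of_base (j : ℤ) (hj : y = a → 0 ≤ j ∧ j < ((N + 1 : ℕ) : ℤ)) :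
    (HNNExtension.t ^ j * HNNExtension.of (mk {r} (of (Window.base a y N))) *
      (HNNExtension.t ^ j)⁻¹ : MagnusExtension h₀ h₁) =
        HNNExtension.of (mk {r} (of ⟨(y, j), hj⟩)) := by
  induction j with
  | zero => simp [Window.base]
  | succ j ih =>
    have hj' : y = a → 0 ≤ (j : ℤ) ∧ (j : ℤ) < N := fun h => by have := hj h; omega
    have hstep := t_mul_of_castSucc h₀ h₁ ⟨(y, j), hj'⟩
    simp only [Window.castSucc, ← ih, Window.succ, add_comm 1 (j : ℤ)] at hstep
    rw [← hstep, add_comm (j : ℤ) 1, zpow_add, zpow_one]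
    simp only [mul_assoc, mul_inv_rev]
  | pred j ih =>
    have hy : y ≠ a := fun h => by have := hj h; omega
    have hstep := t_mul_of_castSucc h₀ h₁ ⟨(y, -j - 1), fun h => absurd h hy⟩
    simp only [Window.castSucc, Window.succ, add_sub_cancel] at hstep
    rw [← ih fun h => absurd h hy, mul_inv_eq_iff_eq_mul, ← eq_inv_mul_iff_mul_eq] at hstep
    rw [hstep, sub_eq_add_neg, add_comm (-(j : ℤ)) (-1), zpow_add, zpow_neg_one]
    simp only [mul_assoc, mul_inv_rev, inv_inv]

theorem toMagnusExtension_windowIncl (v : FreeGroup (Window a (N + 1))) :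
    toMagnusExtension h₀ h₁ (windowIncl a (N + 1) v) = HNNExtension.of (mk {r} v) := by
  have hcomp : (toMagnusExtension h₀ h₁).comp (windowIncl a (N + 1)) =
      HNNExtension.of.comp (mk {r}) :=
    FreeGroup.ext_hom _ _ fun p => by
      simpa using t_zpow_mul_of_base h₀ h₁ p.1.2 p.2
  exact DFunLike.congr_fun hcomp v

theorem exists_leftInverse_toMagnusExtension :
    ∃ g : MagnusExtension h₀ h₁ →* PresentedGroup {windowIncl a (N + 1) r},
      ∀ w, g (toMagnusExtension h₀ h₁ w) = mk _ w := by
  let f : PresentedGroup {r} →* PresentedGroup {windowIncl a (N + 1) r} :=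
    descend ((mk _).comp (windowIncl a (N + 1))) (mk_relator _)
  have hf (p : FreeGroup (Window a N)) :
      mk _ (of t) * f (lowerHom r p) * (mk _ (of t))⁻¹ = f (upperHom r p) := by
    simp only [f, lowerHom, upperHom, MonoidHom.comp_apply, descend_mk, windowIncl_succ, map_mul,
      map_inv]
  obtain ⟨g, hg, hgt⟩ := exists_hnnExtension_lift (h₀ := h₀) (h₁ := h₁) hf
  refine ⟨g, fun w => ?_⟩
  have hcomp : g.comp (toMagnusExtension h₀ h₁) = mk _ := FreeGroup.ext_hom _ _ fun x => by
    rcases eq_or_ne x t with rfl | hx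
    · simp [hgt]
    · rw [MonoidHom.comp_apply, toMagnusExtension_of_coe h₀ h₁ ⟨x, hx⟩, hg]
      simp [f, Window.base]
  exact DFunLike.congr_fun hcomp w

theorem toMagnusExtension_relator : toMagnusExtension h₀ h₁ (windowIncl a (N + 1) r) = 1 := by
  rw [toMagnusExtension_windowIncl, mk_relator, map_one]

theorem toMagnusExtension_eq_one_iff {w : FreeGroup X} :
    toMagnusExtension h₀ h₁ w = 1 ↔ mk {windowIncl a (N + 1) r} w = 1 := by
  obtain ⟨g, hg⟩ := exists_leftInverse_toMagnusExtension h₀ h₁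
  exact ⟨fun hw => by rw [← hg, hw, map_one],
    map_eq_one_of_mk_eq_one _ (toMagnusExtension_relator h₀ h₁)⟩

include h₀ h₁ in
theorem mk_windowIncl_eq_one_iff {v : FreeGroup (Window a (N + 1))} :
    mk {windowIncl a (N + 1) r} (windowIncl a (N + 1) v) = 1 ↔ mk {r} v = 1 := by
  rw [← toMagnusExtension_eq_one_iff h₀ h₁, toMagnusExtension_windowIncl,
    (HNNExtension.of_injective _).eq_iff' (map_one _)]

include h₀ h₁ in
theorem isTorsionFree_windowIncl (hr : IsTorsionFree (PresentedGroup {r})) :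
    IsTorsionFree (PresentedGroup {windowIncl a (N + 1) r}) :=
  isTorsionFree_of_hom (toMagnusExtension_relator h₀ h₁)
    (fun _ => (toMagnusExtension_eq_one_iff h₀ h₁).mp) hr.hnnExtension

end MagnusHNN

section MagnusProperties

open FreeGroup (of)
open PresentedGroup (mk)

universe u

/-- Magnus' Freiheitssatz for the powers of `R` and the generators other than `x`: these freely
generate a free subgroup of `⟨X; Rⁿ⟩`. -/
def Freiheitssatz {X : Type*} (R : FreeGroup X) (x : X) : Prop :=
  ∀ (n : ℕ) (w : FreeGroup X), x ∉ letters w → mk {R ^ n} w = 1 → w = 1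

/-- The properties of the one-relator groups `⟨X; Rⁿ⟩` that are established simultaneously by
induction on the length of `R`. -/
structure MagnusProperties {X : Type*} (R : FreeGroup X) : Prop where
  freiheitssatz : ∀ x, Involves R x → Freiheitssatz R x
  orderOf_mk : R ≠ 1 → ∀ n, orderOf (mk {R ^ n} R) = n
  isTorsionFree : ¬ IsProperPower R → IsTorsionFree (PresentedGroup {R})

variable {X : Type u} {t : X} {a : {y : X // y ≠ t}} {N : ℕ} {R : FreeGroup X}

/-- `r` rewrites a conjugate of `R` in the generators of a window that `r` fills exactly, and no
generator of `r` can be removed by conjugation. -/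
structure IsMagnusLift (R : FreeGroup X) (r : FreeGroup (Window a (N + 1))) : Prop where
  isConj : IsConj R (windowIncl a (N + 1) r)
  involves_of_mem : ∀ s ∈ letters r, Involves r s
  base_mem : Window.base a a N ∈ letters r
  last_mem : Window.last a N ∈ letters r

theorem involves_of_forall_wordLength_le {Y : Type*} {f : FreeGroup Y →* FreeGroup X}
    {r : FreeGroup Y} (hconj : IsConj R (f r))
    (hmin : ∀ v, IsConj R (f v) → wordLength r ≤ wordLength v) {s : Y} (hs : s ∈ letters r) :
    Involves r s := by
  by_contra hnot
  exact (wordLength_substGen_one_lt hs).not_ge <|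
    hmin _ (hconj.trans (f.map_isConj (isConj_substGen_one_of_not_involves hnot)))

theorem exists_shift_window {w : FreeGroup (KernelGen t)} {i : ℤ} (hi : (a, i) ∈ letters w) :
    ∃ (k : Multiplicative ℤ) (N : ℕ), (a, 0) ∈ letters (shift t k w) ∧
      (a, (N : ℤ)) ∈ letters (shift t k w) ∧
      ∀ p ∈ letters (shift t k w), p.1 = a → 0 ≤ p.2 ∧ p.2 < ((N + 1 : ℕ) : ℤ) := by
  have hfin : {j : ℤ | (a, j) ∈ letters w}.Finite :=
    (finite_letters w).preimage (Prod.mk_right_injective a).injOn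
  obtain ⟨lo, hlo, hmin⟩ := Set.exists_min_image _ id hfin ⟨i, hi⟩
  obtain ⟨hi, hhi, hmax⟩ := Set.exists_max_image _ id hfin ⟨i, hi⟩
  obtain ⟨N, hN⟩ := Int.eq_ofNat_of_zero_le (sub_nonneg.mpr (hmax lo hlo))
  have hmem (j : ℤ) : (a, j) ∈ letters (shift t (Multiplicative.ofAdd (-lo)) w) ↔
      (a, lo + j) ∈ letters w := by
    rw [← mem_letters_map_iff (f := Prod.map id (-lo + ·)) (x := (a, lo + j))
      (Function.injective_id.prodMap (add_right_injective _))]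
    rw [Prod.map_apply, neg_add_cancel_left]
    rfl
  refine ⟨Multiplicative.ofAdd (-lo), N, (hmem 0).mpr (by simpa using hlo),
    (hmem N).mpr (by simpa [← hN] using hhi), ?_⟩
  rintro ⟨_, j⟩ hj rfl
  have hlower := hmin _ ((hmem j).mp hj)
  have hupper := hmax _ ((hmem j).mp hj)
  simp only [id_eq] at hlower hupper hN
  push_cast
  omega

theorem exists_isMagnusLift {w : FreeGroup (KernelGen t)} (hconj : IsConj R (kernelIncl t w))
    (hmin : ∀ v, IsConj R (kernelIncl t v) → wordLength w ≤ wordLength v) {i : ℤ}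
    (hi : (a, i) ∈ letters w) :
    ∃ (N : ℕ) (r : FreeGroup (Window a (N + 1))),
      IsMagnusLift R r ∧ wordLength r ≤ wordLength w := by
  obtain ⟨k, N, hbase, hlast, hwindow⟩ := exists_shift_window hi
  obtain ⟨r, hr, hlen⟩ := exists_map_val_eq hwindow
  have hconj_r : IsConj R (windowIncl a (N + 1) r) := by
    rw [windowIncl, MonoidHom.comp_apply, hr, kernelIncl_shift]
    exact hconj.trans (isConj_iff.mpr ⟨_, rfl⟩)
  have hlen_r := hlen.trans (wordLength_shift_le k w)
  have hmem (p : Window a (N + 1)) (hp : p.1 ∈ letters (shift t k w)) : p ∈ letters r := by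
    rwa [← hr, mem_letters_map_iff Subtype.val_injective] at hp
  refine ⟨N, r, ⟨hconj_r, fun s hs => ?_, hmem _ hbase, hmem _ hlast⟩, hlen_r⟩
  exact involves_of_forall_wordLength_le hconj_r
    (fun v hv => hlen_r.trans ((hmin _ hv).trans (wordLength_map_le _ v))) hs

namespace IsMagnusLift

variable {r : FreeGroup (Window a (N + 1))}

theorem lowerHom_injective (h : IsMagnusLift R r) (hr : MagnusProperties r) (n : ℕ) :
    Function.Injective (lowerHom (r ^ n)) :=
  OneRelator.lowerHom_injective <|
    hr.freiheitssatz _ (h.involves_of_mem _ h.last_mem) n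

theorem upperHom_injective (h : IsMagnusLift R r) (hr : MagnusProperties r) (n : ℕ) :
    Function.Injective (upperHom (r ^ n)) :=
  OneRelator.upperHom_injective <|
    hr.freiheitssatz _ (h.involves_of_mem _ h.base_mem) n

theorem mk_windowIncl_eq_one_iff (h : IsMagnusLift R r) (hr : MagnusProperties r) (n : ℕ)
    {v : FreeGroup (Window a (N + 1))} :
    PresentedGroup.mk {R ^ n} (windowIncl a (N + 1) v) = 1 ↔
      PresentedGroup.mk {r ^ n} v = 1 := by
  rw [mk_eq_one_iff_of_isConj (h.isConj.pow n), ← map_pow]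
  exact OneRelator.mk_windowIncl_eq_one_iff (h.lowerHom_injective hr n) (h.upperHom_injective hr n)

theorem orderOf_mk (h : IsMagnusLift R r) (hr : MagnusProperties r) (n : ℕ) :
    orderOf (PresentedGroup.mk {R ^ n} R) = n := by
  have hr1 : r ≠ 1 := by
    rintro rfl
    simpa using h.base_mem
  refine (orderOf_eq_orderOf_iff.mpr fun m => ?_).trans (hr.orderOf_mk hr1 n)
  rw [← map_pow, ← map_pow, ← h.mk_windowIncl_eq_one_iff hr, map_pow (windowIncl a (N + 1))]
  exact ⟨map_eq_one_of_isConj (h.isConj.pow m), map_eq_one_of_isConj (h.isConj.symm.pow m)⟩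

theorem isTorsionFree (h : IsMagnusLift R r) (hr : MagnusProperties r) (hR : ¬ IsProperPower R) :
    IsTorsionFree (PresentedGroup {R}) := by
  have hr' : ¬ IsProperPower r := by
    rintro ⟨s, k, hk, rfl⟩
    obtain ⟨c, hc⟩ := isConj_iff.mp h.isConj.symm
    rw [map_pow, ← conj_pow] at hc
    exact hR ⟨_, k, hk, hc.symm⟩
  have htf := isTorsionFree_windowIncl (pow_one r ▸ h.lowerHom_injective hr 1)
    (pow_one r ▸ h.upperHom_injective hr 1) (hr.isTorsionFree hr')
  exact isTorsionFree_of_hom (map_eq_one_of_isConj h.isConj.symm (mk_relator _))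
    (fun _ => (mk_eq_one_iff_of_isConj h.isConj).mpr) htf

theorem freiheitssatz (h : IsMagnusLift R r) (hr : MagnusProperties r) : Freiheitssatz R a.1 := by
  classical
  intro n w hw hmk
  have hsum : exponentSum t R = 1 :=
    map_eq_one_of_isConj h.isConj.symm (exponentSum_kernelIncl _)
  obtain ⟨v, rfl, -⟩ := exists_kernelIncl_eq (map_eq_one_of_mk_eq_one (exponentSum t)
    (by rw [map_pow, hsum, one_pow]) hmk)
  let f : FreeGroup (KernelGen t) →* FreeGroup (Window a (N + 1)) :=
    FreeGroup.lift fun p => if hp : p.1 = a then 1 else of ⟨p, fun h => absurd h hp⟩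
  have hcomp : (windowIncl a (N + 1)).comp f = (substGen a.1 1).comp (kernelIncl t) :=
    FreeGroup.ext_hom _ _ fun p => by
      by_cases hp : p.1 = a
      · simp [f, hp, a.2.symm]
      · simp [f, hp, a.2.symm, Subtype.coe_ne_coe.mpr hp]
  have hfv : windowIncl a (N + 1) (f v) = kernelIncl t v :=
    (DFunLike.congr_fun hcomp v).trans (substGen_eq_self hw 1)
  have hbase : Window.base a a N ∉ letters (f v) := notMem_letters_map fun p _ => by
    by_cases hp : p.1 = a
    · simp [f, hp]
    · have hne : Window.base a a N ≠ ⟨p, fun h => absurd h hp⟩ := fun h =>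
        hp (congrArg (fun q : Window a (N + 1) => q.1.1) h).symm
      simpa [f, hp] using hne
  rw [← hfv, h.mk_windowIncl_eq_one_iff hr] at hmk
  rw [← hfv, hr.freiheitssatz _ (h.involves_of_mem _ h.base_mem) n _ hbase hmk, map_one]

theorem freiheitssatz_stable (h : IsMagnusLift R r) (hr : MagnusProperties r)
    (ht : Involves R t) : Freiheitssatz R t := by
  classical
  -- Otherwise `windowIncl a (N + 1) r`, a conjugate of `R`, would not contain `t`.
  obtain ⟨s, hs, hindex⟩ : ∃ s ∈ letters r, s.1.2 ≠ 0 := by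
    by_contra! hzero
    refine notMem_letters_map (fun s hs => ?_) (ht _ h.isConj)
    simpa [hzero s hs] using s.1.1.2.symm
  intro n w hw hmk
  let f : FreeGroup X →* FreeGroup (Window a (N + 1)) :=
    FreeGroup.lift fun x => if hx : x = t then 1 else of (Window.base a ⟨x, hx⟩ N)
  have hcomp : (windowIncl a (N + 1)).comp f = substGen t 1 := FreeGroup.ext_hom _ _ fun x => by
    by_cases hx : x = t <;> simp [f, hx, Window.base]
  have hfw : windowIncl a (N + 1) (f w) = w :=
    (DFunLike.congr_fun hcomp w).trans (substGen_eq_self hw 1)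
  have hsw : s ∉ letters (f w) := notMem_letters_map fun x _ => by
    by_cases hx : x = t
    · simp [f, hx]
    · have hne : s ≠ Window.base a ⟨x, hx⟩ N := by
        rintro rfl
        exact hindex rfl
      simpa [f, hx] using hne
  rw [← hfw, h.mk_windowIncl_eq_one_iff hr] at hmk
  rw [← hfw, hr.freiheitssatz _ (h.involves_of_mem _ hs) n _ hsw hmk, map_one]

end IsMagnusLift

theorem exists_mem_letters_of_involves {x : X} (hx : x ≠ t) {w : FreeGroup (KernelGen t)}
    (hconj : IsConj R (kernelIncl t w)) (hR : Involves R x) : ∃ i, (⟨x, hx⟩, i) ∈ letters w := by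
  by_contra! hnot
  refine notMem_letters_map (fun p hp => notMem_letters_iff.mpr ?_) (hR _ hconj)
  have hpx : p.1.1 ≠ x := by
    rintro rfl
    exact hnot p.2 hp
  simp [hpx, hx.symm]

theorem magnusProperties_of_isConj_kernelIncl {w₀ : FreeGroup (KernelGen t)}
    (hconj₀ : IsConj R (kernelIncl t w₀)) (hR : R ≠ 1)
    (ih : ∀ (Z : Type u) (r : FreeGroup Z), wordLength r ≤ wordLength w₀ → MagnusProperties r) :
    MagnusProperties R := by
  obtain ⟨w, hconj, hmin⟩ :=
    (measure wordLength).wf.has_min {w | IsConj R (kernelIncl t w)} ⟨w₀, hconj₀⟩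
  replace hmin (v) (hv : IsConj R (kernelIncl t v)) : wordLength w ≤ wordLength v :=
    not_lt.mp (hmin v hv)
  have exists_lift {a : {y : X // y ≠ t}} {i : ℤ} (hi : (a, i) ∈ letters w) :
      ∃ (N : ℕ) (r : FreeGroup (Window a (N + 1))), IsMagnusLift R r ∧ MagnusProperties r := by
    obtain ⟨N, r, h, hlen⟩ := exists_isMagnusLift hconj hmin hi
    exact ⟨N, r, h, ih _ r (hlen.trans (hmin w₀ hconj₀))⟩
  have hw : w ≠ 1 := by
    rintro rfl
    exact hR (by simpa using hconj)
  obtain ⟨⟨a, i⟩, hi⟩ := letters_nonempty hw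
  obtain ⟨N, r, h, hr⟩ := exists_lift hi
  refine ⟨fun x hx => ?_, fun _ => h.orderOf_mk hr, h.isTorsionFree hr⟩
  rcases eq_or_ne x t with rfl | hxt
  · exact h.freiheitssatz_stable hr hx
  · obtain ⟨j, hj⟩ := exists_mem_letters_of_involves hxt hconj hx
    obtain ⟨_, _, h', hr'⟩ := exists_lift hj
    exact h'.freiheitssatz hr'

end MagnusProperties

section TwistedRoot

open FreeGroup (of)
open PresentedGroup (mk)

variable {X : Type*} {x b : X} {R w : FreeGroup X}

/-- The substitution `x ↦ x * b ^ q`, `b ↦ b ^ p`. -/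
noncomputable def twistedRoot (x b : X) (p : ℕ) (q : ℤ) : FreeGroup X →* FreeGroup X :=
  (substGen x (of x * of b ^ q)).comp (substGen b (of b ^ p))

theorem twistedRoot_of_left (hxb : x ≠ b) (p : ℕ) (q : ℤ) :
    twistedRoot x b p q (of x) = of x * of b ^ q := by
  simp [twistedRoot, hxb]

theorem twistedRoot_of_right (hxb : x ≠ b) (p : ℕ) (q : ℤ) :
    twistedRoot x b p q (of b) = of b ^ p := by
  simp [twistedRoot, hxb.symm]

theorem twistedRoot_of_of_ne {y : X} (hyx : y ≠ x) (hyb : y ≠ b) (p : ℕ) (q : ℤ) :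
    twistedRoot x b p q (of y) = of y := by
  simp [twistedRoot, hyx, hyb]

theorem hom_ext_of_ne {G : Type*} [Group G] {f g : FreeGroup X →* G} (hx : f (of x) = g (of x))
    (hb : f (of b) = g (of b)) (h : ∀ y, y ≠ x → y ≠ b → f (of y) = g (of y)) : f = g :=
  FreeGroup.ext_hom _ _ fun y => by
    by_cases hyx : y = x
    · rwa [hyx]
    by_cases hyb : y = b
    · rwa [hyb]
    exact h y hyx hyb

theorem exponentSum_right_twistedRoot (hxb : x ≠ b) (p : ℕ) (q : ℤ) (w : FreeGroup X) :
    exponentSum b (twistedRoot x b p q w) = exponentSum x w ^ q * exponentSum b w ^ p := by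
  have hcomp : (exponentSum b).comp (twistedRoot x b p q) =
      exponentSum x ^ q * exponentSum b ^ p := by
    refine hom_ext_of_ne (x := x) (b := b) ?_ ?_ fun y hyx hyb => ?_
    · simp [twistedRoot_of_left, hxb]
    · simp [twistedRoot_of_right, hxb, hxb.symm]
    · simp [twistedRoot_of_of_ne, hyx, hyb]
  exact DFunLike.congr_fun hcomp w

theorem exponentSum_left_twistedRoot (hxb : x ≠ b) (p : ℕ) (q : ℤ) (w : FreeGroup X) :
    exponentSum x (twistedRoot x b p q w) = exponentSum x w := by
  have hcomp : (exponentSum x).comp (twistedRoot x b p q) = exponentSum x := by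
    refine hom_ext_of_ne (x := x) (b := b) ?_ ?_ fun y hyx hyb => ?_
    · simp [twistedRoot_of_left, hxb, hxb.symm]
    · simp [twistedRoot_of_right, hxb, hxb.symm]
    · simp [twistedRoot_of_of_ne, hyx, hyb]
  exact DFunLike.congr_fun hcomp w

theorem exists_exponentSum_twistedRoot_eq_one (hxb : x ≠ b) (hx : exponentSum x R ≠ 1) :
    ∃ (p : ℕ) (q : ℤ), p ≠ 0 ∧ exponentSum b (twistedRoot x b p q R) = 1 := by
  set α := (exponentSum x R).toAdd with hα
  set β := (exponentSum b R).toAdd with hβ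
  refine ⟨α.natAbs, -(β * α.sign), by simpa [hα] using hx, Multiplicative.toAdd.injective ?_⟩
  calc (exponentSum b (twistedRoot x b α.natAbs (-(β * α.sign)) R)).toAdd
      = -(β * α.sign) * α + α.natAbs * β := by
        simp [exponentSum_right_twistedRoot hxb, ← hα, ← hβ]
    _ = β * (α.natAbs - α.sign * α) := by ring
    _ = 0 := by rw [Int.sign_mul_self_eq_natAbs, sub_self, mul_zero]

theorem lengthAwayFrom_of_zpow (k : ℤ) : lengthAwayFrom b (of b ^ k) = 0 := by
  rw [lengthAwayFrom, map_zpow, rewrite_of_self, ← map_zpow, SemidirectProduct.left_inr,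
    isLengthFunction_wordLength.map_one]

theorem lengthAwayFrom_twistedRoot_lt (hxb : x ≠ b) (hb : b ∈ letters R) (p : ℕ) (q : ℤ) :
    lengthAwayFrom b (twistedRoot x b p q R) < wordLength R := by
  have hright : lengthAwayFrom b (twistedRoot x b p q (of b)) = 0 := by
    rw [twistedRoot_of_right hxb, ← zpow_natCast, lengthAwayFrom_of_zpow]
  refine (isLengthFunction_lengthAwayFrom.comp (twistedRoot x b p q)).lt_wordLength
    (fun y => ?_) hb hright
  rw [Function.comp_apply]
  by_cases hyb : y = b
  · simp [hyb, hright]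
  by_cases hyx : y = x
  · rw [hyx, twistedRoot_of_left hxb]
    exact (isLengthFunction_lengthAwayFrom.map_mul_le _ _).trans_eq
      (by rw [lengthAwayFrom_of_of_ne hxb, lengthAwayFrom_of_zpow])
  · rw [twistedRoot_of_of_ne hyx hyb, lengthAwayFrom_of_of_ne hyb]

theorem leftInverse_substGen_mul_zpow (hxb : x ≠ b) (q : ℤ) :
    Function.LeftInverse (substGen x (of x * (of b ^ q)⁻¹)) (substGen x (of x * of b ^ q)) := by
  have hcomp : (substGen x (of x * (of b ^ q)⁻¹)).comp (substGen x (of x * of b ^ q)) =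
      MonoidHom.id _ :=
    FreeGroup.ext_hom _ _ fun y => by rcases eq_or_ne y x with rfl | hy <;> simp [*, hxb.symm]
  exact DFunLike.congr_fun hcomp

theorem notMem_letters_substGen_pow (hxb : x ≠ b) (hw : x ∉ letters w) (p : ℕ) :
    x ∉ letters (substGen b (of b ^ p) w) := by
  refine notMem_letters_map fun y hy => notMem_letters_iff.mpr ?_
  have hyx : y ≠ x := fun h => hw (h ▸ hy)
  rcases eq_or_ne y b with rfl | hyb <;> simp [*]

theorem twistedRoot_eq_substGen (hxb : x ≠ b) (hw : x ∉ letters w) (p : ℕ) (q : ℤ) :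
    twistedRoot x b p q w = substGen b (of b ^ p) w :=
  substGen_eq_self (notMem_letters_substGen_pow hxb hw p) _

variable {p : ℕ} [NeZero p] {q : ℤ}

theorem freiheitssatz_of_twistedRoot (hxb : x ≠ b)
    (h : Freiheitssatz (twistedRoot x b p q R) x) : Freiheitssatz R x := by
  intro n w hw hmk
  have hmk' := mk_map_eq_one (twistedRoot x b p q) hmk
  rw [map_pow, twistedRoot_eq_substGen hxb hw] at hmk'
  have hone := h n _ (notMem_letters_substGen_pow hxb hw p) hmk'
  exact substGen_pow_injective p b (hone.trans (map_one _).symm)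

theorem isTorsionFree_of_twistedRoot (hxb : x ≠ b)
    (h : IsTorsionFree (PresentedGroup {twistedRoot x b p q R})) :
    IsTorsionFree (PresentedGroup {R}) :=
  isTorsionFree_of_hom (f := (mk _).comp (twistedRoot x b p q)) (mk_relator _)
    (fun _ hw => mk_eq_one_of_mk_substGen_pow_eq_one p
      (mk_eq_one_of_mk_map_eq_one (leftInverse_substGen_mul_zpow hxb q) hw)) h

theorem isProperPower_of_twistedRoot (hxb : x ≠ b) (hx : exponentSum x R ≠ 1)
    (h : IsProperPower (twistedRoot x b p q R)) : IsProperPower R := by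
  obtain ⟨S, k, hk, hS⟩ := h
  refine isProperPower_of_substGen_pow p hxb hx ⟨substGen x (of x * (of b ^ q)⁻¹) S, k, hk, ?_⟩
  rw [← map_pow, ← hS]
  exact (leftInverse_substGen_mul_zpow hxb q _).symm

end TwistedRoot

section SingleLetter

open FreeGroup (of)
open PresentedGroup (mk)

variable {X : Type*} {x : X}

theorem freiheitssatz_of_zpow (x : X) (k : ℤ) : Freiheitssatz (of x ^ k) x := by
  intro n w hw hmk
  rw [← notMem_letters_iff.mp hw]
  exact map_eq_one_of_mk_eq_one _ (by simp) hmk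

theorem isTorsionFree_freeGroup : IsTorsionFree (FreeGroup X) :=
  fun w => (isOfFinOrder_iff_eq_one w).mp

theorem eq_one_or_neg_one_of_not_isProperPower {G : Type*} [Group G] {g : G} {k : ℤ}
    (hk : ¬ IsProperPower (g ^ k)) : k = 1 ∨ k = -1 := by
  rw [← Int.natAbs_eq_natAbs_iff, Int.natAbs_one]
  by_contra hne
  rcases eq_or_ne k 0 with rfl | hk0
  · exact hk ⟨1, 2, le_rfl, by simp⟩
  · refine hk ⟨g ^ k.sign, k.natAbs, by have := Int.natAbs_pos.mpr hk0; omega, ?_⟩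
    rw [← zpow_natCast, ← zpow_mul, Int.sign_mul_natAbs]

theorem isTorsionFree_of_zpow {k : ℤ} (hk : ¬ IsProperPower (of x ^ k)) :
    IsTorsionFree (PresentedGroup {of x ^ k}) := by
  have hx : mk {of x ^ k} (of x) = 1 := by
    have hrel := mk_relator (of x ^ k)
    rcases eq_one_or_neg_one_of_not_isProperPower hk with rfl | rfl <;> simpa using hrel
  have hcomp : (mk {of x ^ k}).comp (substGen x 1) = mk _ := FreeGroup.ext_hom _ _ fun y => by
    rcases eq_or_ne y x with rfl | hy <;> simp [*]
  refine isTorsionFree_of_hom (f := substGen x 1) (by simp) (fun w hw => ?_)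
    isTorsionFree_freeGroup
  rw [← DFunLike.congr_fun hcomp w, MonoidHom.comp_apply, hw, map_one]

end SingleLetter

section Induction

universe u

variable {X : Type u} {R : FreeGroup X}

theorem magnusProperties_one : MagnusProperties (1 : FreeGroup X) where
  freiheitssatz x hx := by simpa using hx 1 (IsConj.refl 1)
  orderOf_mk h := absurd rfl h
  isTorsionFree h := absurd ⟨1, 2, le_rfl, by simp⟩ h

theorem magnusProperties_of_exponentSum_eq_one {t : X} (ht : t ∈ letters R)
    (hsum : exponentSum t R = 1) (hR : R ≠ 1)
    (ih : ∀ (Z : Type u) (r : FreeGroup Z), wordLength r < wordLength R → MagnusProperties r) :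
    MagnusProperties R := by
  obtain ⟨w, rfl, hlen⟩ := exists_kernelIncl_eq hsum
  have hlt := (isLengthFunction_lengthAwayFrom (t := t)).lt_wordLength (fun y => ?_) ht
    lengthAwayFrom_of_self
  · exact magnusProperties_of_isConj_kernelIncl (IsConj.refl _) hR
      fun Z r hr => ih Z r (hr.trans_lt (hlen.trans_lt hlt))
  · rcases eq_or_ne y t with rfl | hy <;> simp [*]

theorem freiheitssatz_and_isTorsionFree_of_exponentSum_ne_one {x : X} (hx : exponentSum x R ≠ 1)
    (ih : ∀ (Z : Type u) (r : FreeGroup Z), wordLength r < wordLength R → MagnusProperties r) :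
    Freiheitssatz R x ∧ (¬ IsProperPower R → IsTorsionFree (PresentedGroup {R})) := by
  by_cases hb : ∃ b ∈ letters R, b ≠ x
  · obtain ⟨b, hb, hbx⟩ := hb
    obtain ⟨p, q, hp, hsum⟩ := exists_exponentSum_twistedRoot_eq_one hbx.symm hx
    have : NeZero p := ⟨hp⟩
    have hx' : exponentSum x (twistedRoot x b p q R) ≠ 1 := by
      rwa [exponentSum_left_twistedRoot hbx.symm]
    obtain ⟨w, hw, hlen⟩ := exists_kernelIncl_eq hsum
    have h : MagnusProperties (twistedRoot x b p q R) :=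
      magnusProperties_of_isConj_kernelIncl (hw ▸ IsConj.refl _)
        (fun h => hx' (by rw [h, map_one])) fun Z r hr =>
          ih Z r (hr.trans_lt (hlen.trans_lt (lengthAwayFrom_twistedRoot_lt hbx.symm hb p q)))
    exact ⟨freiheitssatz_of_twistedRoot hbx.symm
        (h.freiheitssatz x (involves_of_exponentSum_ne_one hx')),
      fun hR => isTorsionFree_of_twistedRoot hbx.symm
        (h.isTorsionFree (mt (isProperPower_of_twistedRoot hbx.symm hx) hR))⟩
  · push Not at hb
    obtain ⟨k, rfl⟩ := exists_eq_of_zpow hb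
    exact ⟨freiheitssatz_of_zpow x k, isTorsionFree_of_zpow⟩

theorem magnusProperties (R : FreeGroup X) : MagnusProperties R := by
  induction hlen : wordLength R using Nat.strong_induction_on generalizing X with
  | _ m ih =>
  subst hlen
  replace ih (Z : Type u) (r : FreeGroup Z) (hr : wordLength r < wordLength R) :
    MagnusProperties r := ih _ hr r rfl
  by_cases hR : R = 1
  · exact hR ▸ magnusProperties_one
  by_cases hsum : ∃ t ∈ letters R, exponentSum t R = 1
  · obtain ⟨t, ht, hsum⟩ := hsum
    exact magnusProperties_of_exponentSum_eq_one ht hsum hR ih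
  push Not at hsum
  obtain ⟨x, hx⟩ := letters_nonempty hR
  exact {
    freiheitssatz := fun y hy => (freiheitssatz_and_isTorsionFree_of_exponentSum_ne_one
      (hsum y (hy R (IsConj.refl R))) ih).1
    orderOf_mk := fun _ => orderOf_mk_of_not_isOfFinOrder
      ((isOfFinOrder_iff_eq_one (exponentSum x R)).not.mpr (hsum x hx))
    isTorsionFree := (freiheitssatz_and_isTorsionFree_of_exponentSum_ne_one (hsum x hx) ih).2 }

end Induction

end OneRelator

open OneRelator in
theorem statement_16_general {X : Type*} (R : FreeGroup X) (hR1 : R ≠ 1) (n : ℕ) :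
    orderOf (PresentedGroup.mk {R ^ n} R) = n ∧
      ((∀ (S : FreeGroup X) (k : ℕ), 1 ≤ k → R = S ^ k → k = 1) →
        ((∃ g : PresentedGroup {R ^ n}, g ≠ 1 ∧ IsOfFinOrder g) ↔ 1 < n)) := by
  have horder := (magnusProperties R).orderOf_mk hR1 n
  refine ⟨horder, fun hR => ⟨fun ⟨g, hg1, hg⟩ => ?_, fun hn => ⟨PresentedGroup.mk _ R, ?_, ?_⟩⟩⟩
  · by_contra! hn
    refine hg1 ((?_ : IsTorsionFree (PresentedGroup {R ^ n})) g hg)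
    obtain rfl | rfl : n = 0 ∨ n = 1 := by omega
    · exact isTorsionFree_of_hom (f := MonoidHom.id _) (by simp)
        (fun w hw => by rw [show w = 1 from hw, map_one]) isTorsionFree_freeGroup
    · rw [pow_one]
      refine (magnusProperties R).isTorsionFree fun ⟨S, k, hk, hS⟩ => ?_
      have := hR S k (by omega) hS
      omega
  · rw [Ne, ← orderOf_eq_one_iff, horder]
    omega
  · rw [← orderOf_pos_iff, horder]
    omega

/-- Karrass–Magnus–Solitar.  Let `X` have more than one element, let
`R` be a nontrivial element of the free group on `X` which is not a proper power, and let
`n ≥ 1`.  Then the image of `R` in `G = ⟨X; Rⁿ⟩` has order exactly `n`; in particular `G`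
has a nontrivial element of finite order iff `n > 1`. -/
theorem statement_16 {X : Type} [Nontrivial X] (R : FreeGroup X) (hR1 : R ≠ 1)
    (hR : ∀ (S : FreeGroup X) (k : ℕ), 1 ≤ k → R = S ^ k → k = 1)
    (n : ℕ) (hn : 1 ≤ n) :
    orderOf (PresentedGroup.mk {R ^ n} R) = n ∧
      ((∃ g : PresentedGroup {R ^ n}, g ≠ 1 ∧ IsOfFinOrder g) ↔ 1 < n) := by
  have ⟨horder, htorsion⟩ := statement_16_general R hR1 n
  exact ⟨horder, htorsion hR⟩
end
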